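/- Let z₁ < z₂ be real numbers with F(z₁) ≠ ∅ and F(z₂) ≠ ∅. Then the function ψ is continuous on the closed interval [z₁, z₂]. -/

import Mathlib

open Matrix BigOperators

/-- Feasible region of the sub-problem `(D^z)`. -/
def Dfeas {m n : ℕ} (A : Matrix (Fin m) (Fin n) ℝ) (d x0 : Fin n → ℝ) (z : ℝ) :
    Set (Fin n → ℝ) :=
  {y | A.mulVec y = 0 ∧
    (∀ j, x0 j = 0 → -d j ≤ y j ∧ y j ≤ 0) ∧
    (∀ j, 0 < x0 j → x0 j * z - d j ≤ y j ∧ y j ≤ x0 j * z + d j)}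

/-- `ψ(z) = sup {c·y : y ∈ F(z)}`. -/
noncomputable def psi {m n : ℕ} (A : Matrix (Fin m) (Fin n) ℝ)
    (c d x0 : Fin n → ℝ) (z : ℝ) : ℝ :=
  sSup ((fun y => c ⬝ᵥ y) '' Dfeas A d x0 z)


lemma aux_box {m n : ℕ} (A : Matrix (Fin m) (Fin n) ℝ)
    (d x0 : Fin n → ℝ) (hd : ∀ j, 0 < d j) (hx0 : ∀ j, 0 ≤ x0 j)
    (a b z : ℝ) (ha : a ≤ z) (hb : z ≤ b) (y : Fin n → ℝ) (hy : y ∈ Dfeas A d x0 z) :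
    y ∈ Set.Icc (fun j => x0 j * a - d j) (fun j => x0 j * b + d j) := by
  obtain ⟨-, h0, hp⟩ := hy
  refine ⟨fun j => ?_, fun j => ?_⟩ <;> have hdj := hd j <;>
    rcases (hx0 j).eq_or_lt with h | h <;> dsimp only
  · have := h0 j h.symm
    rw [← h]; linarith
  · have := hp j h
    nlinarith [mul_le_mul_of_nonneg_left ha h.le]
  · have := h0 j h.symm
    rw [← h]; linarith
  · have := hp j h
    nlinarith [mul_le_mul_of_nonneg_left hb h.le]

lemma aux_closed {m n : ℕ} (A : Matrix (Fin m) (Fin n) ℝ) (d x0 : Fin n → ℝ) :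
    IsClosed {p : ℝ × (Fin n → ℝ) | p.2 ∈ Dfeas A d x0 p.1} := by
  have e : {p : ℝ × (Fin n → ℝ) | p.2 ∈ Dfeas A d x0 p.1} =
      {p | A.mulVec p.2 = 0} ∩
      ((⋂ j, ⋂ (_ : x0 j = 0), ({p | -d j ≤ p.2 j} ∩ {p | p.2 j ≤ 0})) ∩
      (⋂ j, ⋂ (_ : 0 < x0 j),
        ({p | x0 j * p.1 - d j ≤ p.2 j} ∩ {p | p.2 j ≤ x0 j * p.1 + d j}))) := by
    ext p
    simp only [Set.mem_inter_iff, Set.mem_iInter]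
    exact Iff.rfl
  rw [e]
  refine IsClosed.inter (isClosed_eq ?_ continuous_const) (IsClosed.inter ?_ ?_)
  · exact Continuous.matrix_mulVec continuous_const continuous_snd
  · refine isClosed_iInter fun j => isClosed_iInter fun _ => ?_
    exact (isClosed_le (by fun_prop) (by fun_prop)).inter
      (isClosed_le (by fun_prop) (by fun_prop))
  · refine isClosed_iInter fun j => isClosed_iInter fun _ => ?_
    exact (isClosed_le (by fun_prop) (by fun_prop)).inter
      (isClosed_le (by fun_prop) (by fun_prop))

lemma aux_cont {n : ℕ} (c : Fin n → ℝ) : Continuous (fun y : Fin n → ℝ => c ⬝ᵥ y) := by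
  unfold dotProduct; fun_prop

lemma aux_max {m n : ℕ} (A : Matrix (Fin m) (Fin n) ℝ)
    (c d x0 : Fin n → ℝ) (hd : ∀ j, 0 < d j) (hx0 : ∀ j, 0 ≤ x0 j)
    (z : ℝ) (h : (Dfeas A d x0 z).Nonempty) :
    IsGreatest ((fun y => c ⬝ᵥ y) '' Dfeas A d x0 z) (psi A c d x0 z) := by
  have hc : IsCompact (Dfeas A d x0 z) := by
    refine IsCompact.of_isClosed_subset isCompact_Icc ?_
      (fun y hy => aux_box A d x0 hd hx0 z z z le_rfl le_rfl y hy)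
    exact (aux_closed A d x0).preimage (f := fun y => (z, y)) (by fun_prop)
  exact (hc.image (aux_cont c)).isGreatest_sSup (h.image _)

lemma aux_mem {m n : ℕ} (A : Matrix (Fin m) (Fin n) ℝ)
    (d x0 : Fin n → ℝ) (u v t : ℝ) (ht : 0 ≤ t) (ht1 : t ≤ 1) (y w : Fin n → ℝ)
    (hy : y ∈ Dfeas A d x0 u) (hw : w ∈ Dfeas A d x0 v) :
    (1 - t) • y + t • w ∈ Dfeas A d x0 ((1 - t) * u + t * v) := by
  obtain ⟨a1, a2, a3⟩ := hy
  obtain ⟨b1, b2, b3⟩ := hw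
  have hs : 0 ≤ 1 - t := by linarith
  refine ⟨?_, fun j hj => ?_, fun j hj => ?_⟩
  · rw [Matrix.mulVec_add, Matrix.mulVec_smul, Matrix.mulVec_smul, a1, b1]; simp
  · obtain ⟨p, q⟩ := a2 j hj
    obtain ⟨r, s⟩ := b2 j hj
    simp only [Pi.add_apply, Pi.smul_apply, smul_eq_mul]
    constructor <;> nlinarith [mul_le_mul_of_nonneg_left p hs, mul_le_mul_of_nonneg_left q hs,
      mul_le_mul_of_nonneg_left r ht, mul_le_mul_of_nonneg_left s ht]
  · obtain ⟨p, q⟩ := a3 j hj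
    obtain ⟨r, s⟩ := b3 j hj
    simp only [Pi.add_apply, Pi.smul_apply, smul_eq_mul]
    have e1 := mul_le_mul_of_nonneg_left p hs
    have e2 := mul_le_mul_of_nonneg_left q hs
    have e3 := mul_le_mul_of_nonneg_left r ht
    have e4 := mul_le_mul_of_nonneg_left s ht
    constructor <;> linarith

lemma aux_concave {m n : ℕ} (A : Matrix (Fin m) (Fin n) ℝ)
    (c d x0 : Fin n → ℝ) (hd : ∀ j, 0 < d j) (hx0 : ∀ j, 0 ≤ x0 j)
    (u v t : ℝ) (ht : 0 ≤ t) (ht1 : t ≤ 1)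
    (hu : (Dfeas A d x0 u).Nonempty) (hv : (Dfeas A d x0 v).Nonempty) :
    (Dfeas A d x0 ((1 - t) * u + t * v)).Nonempty ∧
    (1 - t) * psi A c d x0 u + t * psi A c d x0 v ≤ psi A c d x0 ((1 - t) * u + t * v) := by
  obtain ⟨y, hy, hy'⟩ := (aux_max A c d x0 hd hx0 u hu).1
  obtain ⟨w, hw, hw'⟩ := (aux_max A c d x0 hd hx0 v hv).1
  have hm := aux_mem A d x0 u v t ht ht1 y w hy hw
  refine ⟨⟨_, hm⟩, ?_⟩
  have := (aux_max A c d x0 hd hx0 _ ⟨_, hm⟩).2 ⟨_, hm, rfl⟩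
  simp only [dotProduct_add, dotProduct_smul, smul_eq_mul] at this hy' hw'
  rwa [hy', hw'] at this

lemma aux_chord {m n : ℕ} (A : Matrix (Fin m) (Fin n) ℝ)
    (c d x0 : Fin n → ℝ) (hd : ∀ j, 0 < d j) (hx0 : ∀ j, 0 ≤ x0 j)
    (u v z : ℝ) (h : z ∈ Set.uIcc u v)
    (hu : (Dfeas A d x0 u).Nonempty) (hv : (Dfeas A d x0 v).Nonempty) :
    (Dfeas A d x0 z).Nonempty ∧
    (1 - (z - u) / (v - u)) * psi A c d x0 u + (z - u) / (v - u) * psi A c d x0 v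
      ≤ psi A c d x0 z := by
  rcases eq_or_ne u v with rfl | hne
  · simp only [Set.uIcc_self, Set.mem_singleton_iff] at h
    subst h
    simp [hu]
  have hne' : v - u ≠ 0 := sub_ne_zero.2 hne.symm
  have hb : 0 ≤ (z - u) / (v - u) ∧ (z - u) / (v - u) ≤ 1 := by
    rcases Set.mem_uIcc.1 h with ⟨p, q⟩ | ⟨p, q⟩
    · exact ⟨div_nonneg (by linarith) (by linarith), div_le_one_of_le₀ (by linarith) (by linarith)⟩
    · rw [← neg_div_neg_eq]
      exact ⟨div_nonneg (by linarith) (by linarith), div_le_one_of_le₀ (by linarith) (by linarith)⟩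
  have := aux_concave A c d x0 hd hx0 u v _ hb.1 hb.2 hu hv
  have e : (1 - (z - u) / (v - u)) * u + (z - u) / (v - u) * v = z := by
    field_simp; ring
  rwa [e] at this

/-- `ψ` is continuous on `[z₁, z₂]` whenever `F(z₁)` and `F(z₂)` are nonempty. -/
theorem psi_continuousOn {m n : ℕ} (A : Matrix (Fin m) (Fin n) ℝ)
    (c d x0 : Fin n → ℝ) (hd : ∀ j, 0 < d j) (hx0 : ∀ j, 0 ≤ x0 j)
    (z₁ z₂ : ℝ) (h12 : z₁ < z₂)
    (h1 : (Dfeas A d x0 z₁).Nonempty) (h2 : (Dfeas A d x0 z₂).Nonempty) :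
    ContinuousOn (psi A c d x0) (Set.Icc z₁ z₂) := by
  have hne : ∀ z ∈ Set.Icc z₁ z₂, (Dfeas A d x0 z).Nonempty := fun z hz =>
    (aux_chord A c d x0 hd hx0 z₁ z₂ z (Set.Icc_subset_uIcc hz) h1 h2).1
  rw [continuousOn_iff_lower_upperSemicontinuousOn]
  constructor
  · intro z0 hz0 a ha
    have key : ∀ v, ∀ᶠ z in nhdsWithin z0 (Set.Icc z₁ z₂),
        a < (1 - (z - z0) / (v - z0)) * psi A c d x0 z0
          + (z - z0) / (v - z0) * psi A c d x0 v := by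
      intro v
      have hc : Continuous (fun z : ℝ => (1 - (z - z0) / (v - z0)) * psi A c d x0 z0
          + (z - z0) / (v - z0) * psi A c d x0 v) := by fun_prop
      have := hc.continuousAt (x := z0)
      exact (this.eventually (lt_mem_nhds (by simpa using ha))).filter_mono nhdsWithin_le_nhds
    filter_upwards [key z₁, key z₂, self_mem_nhdsWithin] with z k1 k2 hz
    rcases le_total z z0 with hle | hle
    · exact k1.trans_le (aux_chord A c d x0 hd hx0 z0 z₁ z
        (Set.mem_uIcc.2 (Or.inr ⟨hz.1, hle⟩)) (hne _ hz0) h1).2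
    · exact k2.trans_le (aux_chord A c d x0 hd hx0 z0 z₂ z
        (Set.mem_uIcc.2 (Or.inl ⟨hle, hz.2⟩)) (hne _ hz0) h2).2
  · intro z0 hz0 a ha
    have hK : IsCompact ((Set.Icc z₁ z₂ ×ˢ
        Set.Icc (fun j => x0 j * z₁ - d j) (fun j => x0 j * z₂ + d j)) ∩
        ({p : ℝ × (Fin n → ℝ) | p.2 ∈ Dfeas A d x0 p.1} ∩ {p | a ≤ c ⬝ᵥ p.2})) :=
      (isCompact_Icc.prod isCompact_Icc).inter_right
        ((aux_closed A d x0).inter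
          (isClosed_le continuous_const ((aux_cont c).comp continuous_snd)))
    have hcl := (hK.image continuous_fst).isClosed
    have hz0' : z0 ∉ Prod.fst '' ((Set.Icc z₁ z₂ ×ˢ
        Set.Icc (fun j => x0 j * z₁ - d j) (fun j => x0 j * z₂ + d j)) ∩
        ({p : ℝ × (Fin n → ℝ) | p.2 ∈ Dfeas A d x0 p.1} ∩ {p | a ≤ c ⬝ᵥ p.2})) := by
      rintro ⟨⟨z, y⟩, ⟨-, hy, hay⟩, rfl⟩
      have := (aux_max A c d x0 hd hx0 _ ⟨_, hy⟩).2 ⟨_, hy, rfl⟩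
      exact absurd ha (not_lt.2 (le_trans hay this))
    filter_upwards [nhdsWithin_le_nhds (hcl.isOpen_compl.mem_nhds hz0'), self_mem_nhdsWithin]
      with z hz hzI
    by_contra hcon
    obtain ⟨y, hy, hy'⟩ := (aux_max A c d x0 hd hx0 z (hne z hzI)).1
    refine hz ⟨(z, y), ⟨⟨hzI, aux_box A d x0 hd hx0 _ _ z hzI.1 hzI.2 y hy⟩, hy, ?_⟩, rfl⟩
    exact (not_lt.1 hcon).trans_eq hy'.symm
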